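/- Let ℰ = {ε_p(j), j ∈ [p]} be a Gaussian triangular array with standard Normal marginals, u_p = Φ^{←}(1 − 1/p), and suppose P(|max_{j∈[p]} ε_p(j)/u_p − 1| > δ_p) → 0 for some positive sequence δ_p → 0. Let f: ℝ → ℝ be non-decreasing, differentiable, eventually strictly increasing, with lim_{x→∞} f(x) ≠ 0, and whose derivative f′ is either eventually increasing or eventually decreasing as x → ∞. Set η_p(j) := f(ε_p(j)) and v_p := f(u_p). Then for every sequence d_p with d_p ≥ d_p* := u_p δ_p · max{|f′(u_p(1−δ_p))|, |f′(u_p(1+δ_p))|} / |f(u_p)|, one has P(|max_{j∈[p]} η_p(j)/v_p − 1| > d_p) → 0 as p → ∞. -/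

import Mathlib

open MeasureTheory ProbabilityTheory Filter Topology

/-- The standard Normal cumulative distribution function `Φ`. -/
noncomputable def stdGaussianCDF (u : ℝ) : ℝ :=
  ∫ x in Set.Iic u, Real.exp (-x ^ 2 / 2) / Real.sqrt (2 * Real.pi)

/-- The generalized inverse (quantile function) `Φ^{←}` of the standard Normal cdf. -/
noncomputable def stdGaussianQuantile (y : ℝ) : ℝ :=
  sInf {x : ℝ | y ≤ stdGaussianCDF x}

/-- `u_p = Φ^{←}(1 - 1/p)`. -/
noncomputable def uQuantile (p : ℕ) : ℝ :=
  stdGaussianQuantile (1 - 1 / (p : ℝ))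

/-- A finite family of random variables is jointly Gaussian if every linear
combination is Gaussian. -/
def IsJointGaussian {Ω : Type*} [MeasureSpace Ω] {ι : Type*} [Fintype ι]
    (X : ι → Ω → ℝ) : Prop :=
  ∀ c : ι → ℝ, ∃ m : ℝ, ∃ v : NNReal,
    MeasureTheory.Measure.map (fun ω => ∑ i, c i * X i ω) ℙ =
      ProbabilityTheory.gaussianReal m v

/-!
A concentration `|x / u - 1| ≤ δ` says that `x` lies in `[u (1 - δ), u (1 + δ)]`. On this interval
the monotone function `f'` is bounded in absolute value by its values at the two endpoints, so the
mean value inequality bounds `|f x - f u|`, and dividing by `|f u|` gives exactly `d_p*`. As `f` is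
non-decreasing and continuous far out, it carries the maximum of the array to the maximum of its
image. The only input from the Normal distribution is that its quantiles `u_p` are unbounded.
-/

section MeanValue

lemma abs_le_max_abs_abs_of_monotoneOn_or_antitoneOn {α G : Type*} [Preorder α] [AddCommGroup G]
    [LinearOrder G] [IsOrderedAddMonoid G] {g : α → G} {a b z : α}
    (hg : MonotoneOn g (Set.Icc a b) ∨ AntitoneOn g (Set.Icc a b)) (hz : z ∈ Set.Icc a b) :
    |g z| ≤ max |g a| |g b| := by
  have hab : a ≤ b := hz.1.trans hz.2
  have ha : a ∈ Set.Icc a b := Set.left_mem_Icc.2 hab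
  have hb : b ∈ Set.Icc a b := Set.right_mem_Icc.2 hab
  rcases hg with hg | hg
  · exact abs_le_max_abs_abs (hg ha hz hz.1) (hg hz hb hz.2)
  · exact max_comm |g a| |g b| ▸ abs_le_max_abs_abs (hg hz hb hz.2) (hg ha hz hz.1)

variable {f : ℝ → ℝ}

lemma abs_sub_le_max_abs_deriv_mul_abs_sub {a b x y : ℝ}
    (hf : ∀ z ∈ Set.Icc a b, DifferentiableAt ℝ f z)
    (hf' : MonotoneOn (deriv f) (Set.Icc a b) ∨ AntitoneOn (deriv f) (Set.Icc a b))
    (hx : x ∈ Set.Icc a b) (hy : y ∈ Set.Icc a b) :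
    |f y - f x| ≤ max |deriv f a| |deriv f b| * |y - x| :=
  (convex_Icc a b).norm_image_sub_le_of_norm_deriv_le hf
    (fun _ hz => abs_le_max_abs_abs_of_monotoneOn_or_antitoneOn hf' hz) hx hy

lemma abs_div_sub_one_le_iff_mem_Icc {𝕜 : Type*} [Field 𝕜] [LinearOrder 𝕜] [IsStrictOrderedRing 𝕜]
    {u x δ : 𝕜} (hu : 0 < u) :
    |x / u - 1| ≤ δ ↔ x ∈ Set.Icc (u * (1 - δ)) (u * (1 + δ)) := by
  rw [Set.mem_Icc, ← le_div_iff₀' hu, ← div_le_iff₀' hu, abs_le, neg_le_sub_iff_le_add,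
    sub_le_iff_le_add', sub_le_iff_le_add]

lemma abs_comp_div_sub_one_le {u x δ : ℝ} (hu : 0 < u) (hfu : f u ≠ 0)
    (hf : ∀ z ∈ Set.Icc (u * (1 - δ)) (u * (1 + δ)), DifferentiableAt ℝ f z)
    (hf' : MonotoneOn (deriv f) (Set.Icc (u * (1 - δ)) (u * (1 + δ))) ∨
      AntitoneOn (deriv f) (Set.Icc (u * (1 - δ)) (u * (1 + δ))))
    (hx : |x / u - 1| ≤ δ) :
    |f x / f u - 1| ≤
      u * δ * max |deriv f (u * (1 - δ))| |deriv f (u * (1 + δ))| / |f u| := by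
  have hδ : 0 ≤ δ := (abs_nonneg _).trans hx
  have hu_mem : u ∈ Set.Icc (u * (1 - δ)) (u * (1 + δ)) :=
    (abs_div_sub_one_le_iff_mem_Icc hu).1 (by simpa [hu.ne'] using hδ)
  have hx_mem := (abs_div_sub_one_le_iff_mem_Icc hu).1 hx
  have hxu : |x - u| ≤ u * δ := by
    rwa [div_sub_one hu.ne', abs_div, abs_of_pos hu, div_le_iff₀' hu] at hx
  rw [div_sub_one hfu, abs_div]
  gcongr
  calc |f x - f u|
      ≤ max |deriv f (u * (1 - δ))| |deriv f (u * (1 + δ))| * |x - u| :=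
        abs_sub_le_max_abs_deriv_mul_abs_sub hf hf' hu_mem hx_mem
    _ ≤ max |deriv f (u * (1 - δ))| |deriv f (u * (1 + δ))| * (u * δ) := by gcongr
    _ = u * δ * max |deriv f (u * (1 - δ))| |deriv f (u * (1 + δ))| := mul_comm _ _

end MeanValue

section Monotone

lemma eventually_ne_of_monotone_of_not_tendsto {α β : Type*} [Preorder α] [IsDirectedOrder α]
    [Nonempty α] [PartialOrder β] [TopologicalSpace β] {f : α → β} {c : β} (hf : Monotone f)
    (hc : ¬ Tendsto f atTop (𝓝 c)) : ∀ᶠ x in atTop, f x ≠ c := by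
  contrapose! hc
  have hfreq : ∀ a, ∃ b ≥ a, f b = c := frequently_atTop.1 (by simpa using hc)
  obtain ⟨a, -, rfl⟩ := hfreq (Classical.arbitrary α)
  refine tendsto_const_nhds.congr' ?_
  filter_upwards [eventually_ge_atTop a] with x hx
  obtain ⟨b, hxb, hb⟩ := hfreq x
  exact (hf hx).antisymm (hb ▸ hf hxb)

lemma map_iSup_of_monotone_of_iSup_ne_zero {ι : Sort*} {f : ℝ → ℝ} {g : ι → ℝ} (hf : Monotone f)
    (hfc : ContinuousAt f (⨆ i, g i)) (hg : ⨆ i, g i ≠ 0) : f (⨆ i, g i) = ⨆ i, f (g i) := by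
  -- The real supremum of an empty or unbounded family is `0`.
  have : Nonempty ι := not_isEmpty_iff.1 fun _ => hg (Real.iSup_of_isEmpty g)
  have hbdd : BddAbove (Set.range g) := not_imp_comm.1 Real.iSup_of_not_bddAbove hg
  exact hf.map_ciSup_of_continuousAt hfc hbdd

lemma tendsto_sInf_setOf_le_atTop {α β : Type*} [ConditionallyCompleteLinearOrder α] [Nonempty α]
    [LinearOrder β] [TopologicalSpace β] [OrderTopology β] {F : α → β} {c : β} (hF : Monotone F)
    (hFc : Tendsto F atTop (𝓝 c)) (hlt : ∀ x, F x < c) :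
    Tendsto (fun y => sInf {x | y ≤ F x}) (𝓝[<] c) atTop := by
  refine tendsto_atTop.2 fun K => ?_
  filter_upwards [Ioo_mem_nhdsLT (hlt K)] with y ⟨hKy, hyc⟩
  have hne : {x | y ≤ F x}.Nonempty := (hFc.eventually (Ici_mem_nhds hyc)).exists
  exact le_csInf hne fun x hx => (hF.reflect_lt (hKy.trans_le hx)).le

end Monotone

section GaussianQuantile

lemma cdf_lt_one_of_isOpenPosMeasure (μ : Measure ℝ) [IsProbabilityMeasure μ] [μ.IsOpenPosMeasure]
    (x : ℝ) : cdf μ x < 1 := by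
  have hpos : 0 < μ.real (Set.Ioi x) :=
    ENNReal.toReal_pos (isOpen_Ioi.measure_ne_zero μ Set.nonempty_Ioi) (measure_ne_top μ _)
  rw [cdf_eq_real, ← Set.compl_Ioi, probReal_compl_eq_one_sub measurableSet_Ioi]
  exact sub_lt_self 1 hpos

lemma stdGaussianCDF_eq_cdf : stdGaussianCDF = cdf (gaussianReal 0 1) := by
  ext u
  rw [cdf_eq_real, measureReal_def, gaussianReal_apply_eq_integral 0 one_ne_zero,
    ENNReal.toReal_ofReal (integral_nonneg fun x => gaussianPDFReal_nonneg 0 1 x)]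
  refine integral_congr_ae (ae_of_all _ fun x => ?_)
  simp only [gaussianPDFReal, NNReal.coe_one, mul_one, sub_zero]
  ring

lemma tendsto_stdGaussianQuantile_atTop : Tendsto stdGaussianQuantile (𝓝[<] 1) atTop := by
  have : (gaussianReal 0 1).IsOpenPosMeasure :=
    (gaussianReal_absolutelyContinuous' 0 one_ne_zero).isOpenPosMeasure
  have hlt := cdf_lt_one_of_isOpenPosMeasure (gaussianReal 0 1)
  simp only [← stdGaussianCDF_eq_cdf] at hlt
  exact tendsto_sInf_setOf_le_atTop (stdGaussianCDF_eq_cdf ▸ monotone_cdf _)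
    (stdGaussianCDF_eq_cdf ▸ tendsto_cdf_atTop _) hlt

lemma tendsto_uQuantile_atTop : Tendsto uQuantile atTop atTop := by
  refine tendsto_stdGaussianQuantile_atTop.comp (tendsto_nhdsWithin_iff.2 ⟨?_, ?_⟩)
  · simpa using (tendsto_const_nhds (x := (1 : ℝ))).sub tendsto_one_div_atTop_nhds_zero_nat
  · filter_upwards [eventually_gt_atTop 0] with p hp
    exact sub_lt_self (1 : ℝ) (by positivity)

end GaussianQuantile

theorem concentration_monotone_function_general {α Ω : Type*} {ι : α → Type*} [MeasurableSpace Ω]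
    {μ : Measure Ω} {l : Filter α} {ε : (p : α) → ι p → Ω → ℝ} {u δ d : α → ℝ} {f : ℝ → ℝ}
    (hu : ∀ᶠ p in l, 0 < u p) (huδ : Tendsto (fun p => u p * (1 - δ p)) l atTop)
    (hconc : Tendsto (fun p => μ {ω | δ p < |(⨆ i, ε p i ω) / u p - 1|}) l (𝓝 0))
    (hf_mono : Monotone f) (hf_diff : ∀ᶠ x in atTop, DifferentiableAt ℝ f x)
    (hf_ne : ∀ᶠ x in atTop, f x ≠ 0)
    (hf_deriv_mono : (∃ M, MonotoneOn (deriv f) (Set.Ici M)) ∨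
      ∃ M, AntitoneOn (deriv f) (Set.Ici M))
    (hd : ∀ᶠ p in l, u p * δ p *
      max |deriv f (u p * (1 - δ p))| |deriv f (u p * (1 + δ p))| / |f (u p)| ≤ d p) :
    Tendsto (fun p => μ {ω | d p < |(⨆ i, f (ε p i ω)) / f (u p) - 1|}) l (𝓝 0) := by
  obtain ⟨M, hM⟩ := exists_or.2 hf_deriv_mono
  obtain ⟨N, hN⟩ := eventually_atTop.1 (hf_diff.and hf_ne)
  refine tendsto_of_tendsto_of_tendsto_of_le_of_le' tendsto_const_nhds hconc
    (Eventually.of_forall fun _ => zero_le) ?_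
  filter_upwards [hu, hd, huδ.eventually_gt_atTop 0, huδ.eventually_ge_atTop M,
    huδ.eventually_ge_atTop N] with p hup hdp h_pos hpM hpN
  refine measure_mono fun ω => ?_
  simp only [Set.mem_ofPred_eq]
  contrapose!
  intro hω
  have hδ : 0 ≤ δ p := (abs_nonneg _).trans hω
  have hmax : u p * (1 - δ p) ≤ ⨆ i, ε p i ω := ((abs_div_sub_one_le_iff_mem_Icc hup).1 hω).1
  have hle : u p * (1 - δ p) ≤ u p := mul_le_of_le_one_right hup.le (sub_le_self 1 hδ)
  have hsub : Set.Icc (u p * (1 - δ p)) (u p * (1 + δ p)) ⊆ Set.Ici M :=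
    fun _ hz => hpM.trans hz.1
  rw [← map_iSup_of_monotone_of_iSup_ne_zero hf_mono (hN _ (hpN.trans hmax)).1.continuousAt
    (h_pos.trans_le hmax).ne']
  exact (abs_comp_div_sub_one_le hup (hN _ (hpN.trans hle)).2
    (fun z hz => (hN z (hpN.trans hz.1)).1) (hM.imp (·.mono hsub) (·.mono hsub)) hω).trans hdp

/-- Concentration of maxima for monotone functions of a Gaussian array: if
`P(|max ε_p(i)/u_p - 1| > δ_p) → 0` and `f` is non-decreasing, differentiable,
eventually strictly increasing, with limit at `+∞` different from `0` and eventually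
monotone derivative, then `P(|max f(ε_p(i))/f(u_p) - 1| > d_p) → 0` for every `d_p`
dominating `d_p* = u_p δ_p max{|f'(u_p(1-δ_p))|, |f'(u_p(1+δ_p))|}/|f(u_p)|`. -/
theorem concentration_monotone_function
    {Ω : Type*} [MeasureSpace Ω] [IsProbabilityMeasure (ℙ : Measure Ω)]
    (ε : (p : ℕ) → Fin p → Ω → ℝ)
    (hmeas : ∀ p i, Measurable (ε p i))
    (hGauss : ∀ p, IsJointGaussian (ε p))
    (hmarg : ∀ p i, Measure.map (ε p i) ℙ = gaussianReal 0 1)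
    (δ : ℕ → ℝ) (hδ_pos : ∀ p, 0 < δ p) (hδ0 : Tendsto δ atTop (𝓝 0))
    (hconc : Tendsto (fun p : ℕ =>
        ℙ {ω | δ p < |(⨆ i : Fin p, ε p i ω) / uQuantile p - 1|}) atTop (𝓝 0))
    (f : ℝ → ℝ)
    (hf_mono : Monotone f)
    (hf_diff : Differentiable ℝ f)
    (hf_strict : ∃ M : ℝ, StrictMonoOn f (Set.Ici M))
    (hf_lim : ¬ Tendsto f atTop (𝓝 0))
    (hf_deriv_mono : (∃ M : ℝ, MonotoneOn (deriv f) (Set.Ici M)) ∨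
      (∃ M : ℝ, AntitoneOn (deriv f) (Set.Ici M)))
    (d : ℕ → ℝ)
    (hd : ∀ p : ℕ,
      uQuantile p * δ p *
          max |deriv f (uQuantile p * (1 - δ p))| |deriv f (uQuantile p * (1 + δ p))| /
        |f (uQuantile p)| ≤ d p) :
    Tendsto (fun p : ℕ =>
        ℙ {ω | d p < |(⨆ i : Fin p, f (ε p i ω)) / f (uQuantile p) - 1|})
      atTop (𝓝 0) := by
  have hu := tendsto_uQuantile_atTop
  have huδ : Tendsto (fun p => uQuantile p * (1 - δ p)) atTop atTop :=
    hu.atTop_mul_pos one_pos (by simpa using hδ0.const_sub 1)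
  exact concentration_monotone_function_general (hu.eventually_gt_atTop 0) huδ hconc hf_mono
    (.of_forall hf_diff) (eventually_ne_of_monotone_of_not_tendsto hf_mono hf_lim) hf_deriv_mono
    (.of_forall hd)
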